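/- Let n≥1 be an integer, x∈(−∞,1)∖{0}, and g∈C([0,1];ℝ). Consider the ordinary differential equation (1−xr²)·r·F″(r)−(2n−1)(1−xr²)·F′(r)+8rx·F(r)=g(r) on (0,1). A function F∈C([0,1])∩C²((0,1)) with F(0)=0 solves this equation if and only if F(r)=r^{2n}F_n(xr²)·[F(1)/F_n(x)−(x^{n−1}/4)·∫_{xr²}^{x}(τ^{n+1}F_n(τ)²)^{−1}·(∫₀^τ (F_n(s)/(1−s))·√(x/s)·g(√(s/x))ds)dτ] for all r∈[0,1]; in particular the set of such solutions is a one-parameter family parametrized by the value F(1). -/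

import Mathlib

open MeasureTheory Real Set

/-- Rising factorial (Pochhammer symbol) `(a)_k`. -/
noncomputable def poch (a : ℝ) (k : ℕ) : ℝ := (ascPochhammer ℝ k).eval a

/-- Gauss hypergeometric function `F(a,b;c;x)`: given by Euler's integral representation
when `c > b > 0` (valid for all `x ∈ (-∞,1]`), and by the defining power series otherwise. -/
noncomputable def hyper (a b c x : ℝ) : ℝ :=
  if b < c ∧ 0 < b then
    Real.Gamma c / (Real.Gamma b * Real.Gamma (c - b)) *
      ∫ t in (0:ℝ)..1, t ^ (b - 1) * (1 - t) ^ (c - b - 1) * (1 - x * t) ^ (-a)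
  else
    ∑' k : ℕ, poch a k * poch b k / (poch c k * (Nat.factorial k)) * x ^ k

/-- The coefficient `a_t = (t - √(t²+8))/2`. -/
noncomputable def aCoef (t : ℝ) : ℝ := (t - Real.sqrt (t ^ 2 + 8)) / 2

/-- The coefficient `b_t = (t + √(t²+8))/2`. -/
noncomputable def bCoef (t : ℝ) : ℝ := (t + Real.sqrt (t ^ 2 + 8)) / 2

/-- `F_t(x) = F(a_t, b_t; t+1; x)`. -/
noncomputable def Fhyp (t x : ℝ) : ℝ := hyper (aCoef t) (bCoef t) (t + 1) x

/-- The dispersion function `ζ_n` associated with the quadratic profile `f₀(r) = Ar² + B`. -/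
noncomputable def zetaDisp (A B : ℝ) (n : ℕ) (x : ℝ) : ℝ :=
  Fhyp n x * (1 - x + (A + 2 * B) / (A * ((n : ℝ) + 1)) * x)
    + ∫ τ in (0:ℝ)..1, Fhyp n (τ * x) * τ ^ n * (-1 + 2 * x * τ)

/-!
For `n ≥ 2` Euler's integral shows that `F_n` is positive on `(-∞, 1)` and solves the hypergeometric
equation there, and `F_1(u) = 1 - u`. Hence `u(r) = r^{2n} F_n(xr²)` is a positive solution of the
homogeneous radial equation. The Wronskian of `u` and `F`, divided by `r^{2n-1}`, is
`W = r F_n(xr²) F' - (2n F_n(xr²) + 2xr² F_n'(xr²)) F`, and the equation for `F` is equivalent to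
`W' = F_n(xr²) g / (1 - xr²)`; moreover `(F/u)' = W / (r^{2n+1} F_n(xr²)²)`. By the first identity
`W` has a limit `C` at `0`, so `r F'(r) → C / F_n(0)`; for `C ≠ 0` the function `F` would diverge
logarithmically at `0`, so `C = 0`. Integrating `W'` from `0` and `(F/u)'` up to `1`, and
substituting `s = xσ²`, `τ = xρ²`, gives the formula.
-/

open Filter Topology

section Calculus

variable {f f' k : ℝ → ℝ} {α β L m : ℝ}

/- Applied on `[r, 2r]`, the mean value theorem gives `c ∈ (r, 2r)` with
`|c f'(c)| ≤ 2 |f(2r) - f(r)|`. -/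
theorem eq_zero_of_tendsto_mul_deriv (hf : Tendsto f (𝓝[>] 0) (𝓝 m))
    (hf' : ∀ᶠ r in 𝓝[>] 0, HasDerivAt f (f' r) r)
    (hL : Tendsto (fun r ↦ r * f' r) (𝓝[>] 0) (𝓝 L)) : L = 0 := by
  have double : Tendsto (fun r : ℝ ↦ 2 * r) (𝓝[>] 0) (𝓝[>] 0) := by
    refine tendsto_nhdsWithin_iff.2 ⟨?_, ?_⟩
    · exact (Continuous.tendsto' (by fun_prop) 0 0 (by simp)).mono_left nhdsWithin_le_nhds
    · filter_upwards [self_mem_nhdsWithin] with r (hr : 0 < r) using mul_pos two_pos hr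
  have slope : ∀ᶠ r in 𝓝[>] (0 : ℝ), ∃ c ∈ Ioo r (2 * r), r * f' c = f (2 * r) - f r := by
    obtain ⟨δ, _, hδ⟩ := mem_nhdsGT_iff_exists_Ioo_subset.1 hf'
    filter_upwards [self_mem_nhdsWithin, double.eventually (Ioo_mem_nhdsGT ‹0 < δ›)] with r hr hr2
    have hd : ∀ s ∈ Icc r (2 * r), HasDerivAt f (f' s) s := fun s hs ↦
      hδ ⟨lt_of_lt_of_le hr hs.1, hs.2.trans_lt hr2.2⟩
    obtain ⟨c, hc, h⟩ := exists_hasDerivAt_eq_slope f f' (by linarith [mem_Ioi.1 hr])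
      (HasDerivAt.continuousOn hd) fun s hs ↦ hd s (Ioo_subset_Icc_self hs)
    refine ⟨c, hc, ?_⟩
    rw [h, show 2 * r - r = r by ring, mul_div_cancel₀ _ (ne_of_gt hr)]
  obtain ⟨c, hc⟩ := slope.choice
  have c_tendsto : Tendsto c (𝓝[>] 0) (𝓝[>] 0) := by
    refine tendsto_nhdsWithin_iff.2 ⟨?_, ?_⟩
    · refine tendsto_of_tendsto_of_tendsto_of_le_of_le' (tendsto_id.mono_left nhdsWithin_le_nhds)
        (double.mono_right nhdsWithin_le_nhds) ?_ ?_ <;> filter_upwards [hc] with r hr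
      exacts [hr.1.1.le, hr.1.2.le]
    · filter_upwards [hc, self_mem_nhdsWithin] with r hr hr0 using lt_trans hr0 hr.1.1
  refine tendsto_nhds_unique (hL.comp c_tendsto) (squeeze_zero_norm' ?_ (a := fun r ↦
    2 * |f (2 * r) - f r|) (by simpa using ((hf.comp double).sub hf).abs.const_mul 2))
  filter_upwards [hc, self_mem_nhdsWithin] with r ⟨hcr, h⟩ (hr : 0 < r)
  rw [Function.comp_apply, Real.norm_eq_abs, ← h, abs_mul, abs_mul, ← mul_assoc, abs_of_pos hr,
    abs_of_pos (hr.trans hcr.1)]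
  exact mul_le_mul_of_nonneg_right hcr.2.le (abs_nonneg _)

theorem forall_hasDerivAt_iff_eq_integral (hk : ContinuousOn k (Icc α β))
    (hf : ∀ C, Tendsto f (𝓝[>] α) (𝓝 C) → C = 0) :
    (∀ r ∈ Ioo α β, HasDerivAt f (k r) r) ↔ ∀ r ∈ Ioo α β, f r = ∫ s in α..r, k s := by
  have primitive : ∀ r ∈ Ioo α β, HasDerivAt (fun r ↦ ∫ s in α..r, k s) (k r) r := fun r hr ↦
    intervalIntegral.integral_hasDerivAt_right
      ((hk.mono (Icc_subset_Icc_right hr.2.le)).intervalIntegrable_of_Icc hr.1.le)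
      ((hk.mono Ioo_subset_Icc_self).stronglyMeasurableAtFilter isOpen_Ioo r hr)
      (hk.continuousAt (Icc_mem_nhds hr.1 hr.2))
  constructor
  · intro h r hr
    have hαβ : α < β := hr.1.trans hr.2
    obtain ⟨C, hC⟩ := isOpen_Ioo.exists_eq_add_of_deriv_eq isPreconnected_Ioo
      (fun r hr ↦ (h r hr).differentiableAt.differentiableWithinAt)
      (fun r hr ↦ (primitive r hr).differentiableAt.differentiableWithinAt)
      (fun r hr ↦ (h r hr).deriv.trans (primitive r hr).deriv.symm)
    have primitive_tendsto : Tendsto (fun r ↦ ∫ s in α..r, k s) (𝓝[>] α) (𝓝 0) := by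
      have hc := intervalIntegral.continuousOn_primitive_interval (μ := volume)
        (hk.integrableOn_Icc.mono_set (uIcc_of_le hαβ.le).subset) α left_mem_uIcc
      rw [uIcc_of_le hαβ.le] at hc
      simpa [ContinuousWithinAt] using hc.mono_of_mem_nhdsWithin (Icc_mem_nhdsGT hαβ)
    have C_eq_zero : C = 0 := hf C <| by
      refine Tendsto.congr' ?_ (by simpa using primitive_tendsto.add_const C)
      filter_upwards [Ioo_mem_nhdsGT hαβ] with r hr using (hC hr).symm
    simpa [C_eq_zero] using hC hr
  · intro h r hr
    refine (primitive r hr).congr_of_eventuallyEq ?_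
    filter_upwards [isOpen_Ioo.mem_nhds hr] with s hs using h s hs

theorem forall_deriv_eq_iff_eq_sub_integral (hf : ContinuousOn f (Ioc α β))
    (hf' : ∀ r ∈ Ioo α β, HasDerivAt f (f' r) r) (hk : ContinuousOn k (Ioc α β)) :
    (∀ r ∈ Ioo α β, f' r = k r) ↔ ∀ r ∈ Ioc α β, f r = f β - ∫ s in r..β, k s := by
  have integrable : ∀ r ∈ Ioc α β, IntervalIntegrable k volume r β := fun r hr ↦
    (hk.mono (Icc_subset_Ioc hr.1 le_rfl)).intervalIntegrable_of_Icc hr.2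
  constructor
  · intro h r hr
    rw [intervalIntegral.integral_eq_sub_of_hasDerivAt_of_le hr.2
      (hf.mono (Icc_subset_Ioc hr.1 le_rfl)) (fun s hs ↦ ?_) (integrable r hr), sub_sub_cancel]
    have hs' : s ∈ Ioo α β := ⟨hr.1.trans hs.1, hs.2⟩
    exact h s hs' ▸ hf' s hs'
  · intro h r hr
    have primitive : HasDerivAt (fun r ↦ f β - ∫ s in r..β, k s) (k r) r := by
      simpa using (intervalIntegral.integral_hasDerivAt_left (integrable r ⟨hr.1, hr.2.le⟩)
        ((hk.mono Ioo_subset_Ioc_self).stronglyMeasurableAtFilter isOpen_Ioo r hr)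
        (hk.continuousAt (Ioc_mem_nhds hr.1 hr.2))).const_sub (f β)
    refine (hf' r hr).unique (primitive.congr_of_eventuallyEq ?_)
    filter_upwards [isOpen_Ioo.mem_nhds hr] with s hs using h s ⟨hs.1, hs.2.le⟩

theorem hasDerivAt_mul_sq (x r : ℝ) : HasDerivAt (fun r ↦ x * r ^ 2) (2 * x * r) r :=
  ((hasDerivAt_pow 2 r).const_mul x).congr_deriv (by norm_num; ring)

theorem integral_eq_integral_comp_mul_sq (f : ℝ → ℝ) (x : ℝ) (hα : 0 ≤ α) (hβ : 0 ≤ β) :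
    ∫ s in (x * α ^ 2)..(x * β ^ 2), f s = ∫ σ in α..β, 2 * x * σ * f (x * σ ^ 2) := by
  have hmem : ∀ σ ∈ Ioo (min α β) (max α β), 0 ≤ σ := fun σ hσ ↦ (le_min hα hβ).trans hσ.1.le
  rcases le_total 0 x with hx | hx
  · refine (intervalIntegral.integral_deriv_smul_comp_of_deriv_nonneg (by fun_prop)
      (fun σ _ ↦ hasDerivAt_mul_sq x σ) fun σ hσ ↦ ?_).symm
    exact mul_nonneg (by linarith) (hmem σ hσ)
  · refine (intervalIntegral.integral_deriv_smul_comp_of_deriv_nonpos (by fun_prop)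
      (fun σ _ ↦ hasDerivAt_mul_sq x σ) fun σ hσ ↦ ?_).symm
    exact mul_nonpos_of_nonpos_of_nonneg (by linarith) (hmem σ hσ)

end Calculus

/-- `φ` is positive on `(-∞, 1)` and solves there the hypergeometric equation with parameters
`a`, `b`, `c`; twice differentiability is part of the notion, so no value of `deriv` in `ode` is
a junk value. -/
structure IsPositiveHypergeometric (a b c : ℝ) (φ : ℝ → ℝ) : Prop where
  pos : ∀ ⦃u⦄, u < 1 → 0 < φ u
  differentiableAt : ∀ ⦃u⦄, u < 1 → DifferentiableAt ℝ φ u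
  differentiableAt_deriv : ∀ ⦃u⦄, u < 1 → DifferentiableAt ℝ (deriv φ) u
  ode : ∀ ⦃u⦄, u < 1 →
    u * (1 - u) * deriv (deriv φ) u + (c - (a + b + 1) * u) * deriv φ u - a * b * φ u = 0

theorem IsPositiveHypergeometric.const_mul {a b c κ : ℝ} {φ : ℝ → ℝ}
    (hφ : IsPositiveHypergeometric a b c φ) (hκ : 0 < κ) :
    IsPositiveHypergeometric a b c (fun u ↦ κ * φ u) where
  pos u hu := mul_pos hκ (hφ.pos hu)
  differentiableAt u hu := (hφ.differentiableAt hu).const_mul κ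
  differentiableAt_deriv u hu := by
    simpa only [deriv_const_mul_field'] using (hφ.differentiableAt_deriv hu).const_mul κ
  ode u hu := by
    simp only [deriv_const_mul_field']
    linear_combination κ * hφ.ode hu

section EulerIntegral

/-- The integrand `t^(b-1) (1-t)^(c-b-1) (1-xt)^(-a)` of Euler's integral. -/
noncomputable def eulerIntegrand (a b c x t : ℝ) : ℝ :=
  t ^ (b - 1) * (1 - t) ^ (c - b - 1) * (1 - x * t) ^ (-a)

/-- Euler's integral, which is the hypergeometric function `F(a,b;c;x)` up to its factor of
Gamma functions. -/
noncomputable def eulerIntegral (a b c x : ℝ) : ℝ :=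
  ∫ t in (0 : ℝ)..1, eulerIntegrand a b c x t

variable {a b c x t : ℝ}

theorem one_sub_mul_pos (hx : x < 1) (ht : t ∈ Icc 0 1) : 0 < 1 - x * t := by
  rcases le_or_gt x 0 with h | h
  · linarith [mul_nonpos_of_nonpos_of_nonneg h ht.1]
  · linarith [mul_le_of_le_one_right h.le ht.2]

theorem intervalIntegrable_rpow_mul_one_sub_rpow (hb : 0 < b) (hc : 0 < c) :
    IntervalIntegrable (fun t : ℝ ↦ t ^ (b - 1) * (1 - t) ^ (c - 1)) volume 0 1 := by
  have hre := (Complex.betaIntegral_convergent (u := b) (v := c) (by simpa) (by simpa)).norm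
  refine hre.congr_uIoo fun t ht ↦ ?_
  rw [uIoo_of_le zero_le_one] at ht
  have h1t : 0 < 1 - t := sub_pos.2 ht.2
  have norm_left : ‖(t : ℂ) ^ ((b : ℂ) - 1)‖ = t ^ (b - 1) := by
    simpa using Complex.norm_cpow_eq_rpow_re_of_pos ht.1 ((b : ℂ) - 1)
  have norm_right : ‖(1 - (t : ℂ)) ^ ((c : ℂ) - 1)‖ = (1 - t) ^ (c - 1) := by
    simpa using Complex.norm_cpow_eq_rpow_re_of_pos h1t ((c : ℂ) - 1)
  simp only [norm_mul, norm_left, norm_right]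

theorem intervalIntegrable_eulerIntegrand (hb : 0 < b) (hbc : b < c) (hx : x < 1) :
    IntervalIntegrable (eulerIntegrand a b c x) volume 0 1 := by
  refine (intervalIntegrable_rpow_mul_one_sub_rpow hb (sub_pos.2 hbc)).mul_continuousOn ?_
  rw [uIcc_of_le zero_le_one]
  exact ContinuousOn.rpow_const (by fun_prop) fun t ht ↦ .inl (one_sub_mul_pos hx ht).ne'

theorem eulerIntegral_pos (hb : 0 < b) (hbc : b < c) (hx : x < 1) :
    0 < eulerIntegral a b c x := by
  refine intervalIntegral.intervalIntegral_pos_of_pos_on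
    (intervalIntegrable_eulerIntegrand hb hbc hx) (fun t ht ↦ ?_) one_pos
  have h0 : 0 < t := ht.1
  have h1 : 0 < 1 - t := sub_pos.2 ht.2
  have h2 : 0 < 1 - x * t := one_sub_mul_pos hx (Ioo_subset_Icc_self ht)
  unfold eulerIntegrand
  positivity

theorem hasDerivAt_eulerIntegrand_param (hx : x < 1) (ht : t ∈ Ioc 0 1) :
    HasDerivAt (fun v ↦ eulerIntegrand a b c v t)
      (a * eulerIntegrand (a + 1) (b + 1) (c + 1) x t) x := by
  have hpos : 0 < 1 - x * t := one_sub_mul_pos hx (Ioc_subset_Icc_self ht)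
  have hbase : HasDerivAt (fun v ↦ 1 - v * t) (-t) x := by
    simpa using ((hasDerivAt_id x).mul_const t).const_sub 1
  refine ((hbase.rpow_const (p := -a) (.inl hpos.ne')).const_mul _).congr_deriv ?_
  have split : t ^ b = t ^ (b - 1) * t := by rw [← rpow_add_one ht.1.ne', sub_add_cancel]
  rw [eulerIntegrand, add_sub_cancel_right, add_sub_add_right_eq_sub, split, neg_add']
  ring

theorem exists_forall_norm_one_sub_mul_rpow_le (p : ℝ) (hx : x < 1) :
    ∃ s ∈ 𝓝 x, s ⊆ Iio 1 ∧ ∃ B, ∀ v ∈ s, ∀ t ∈ Icc (0 : ℝ) 1, ‖(1 - v * t) ^ p‖ ≤ B := by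
  obtain ⟨y, hxy, hy⟩ := exists_between hx
  refine ⟨Icc (x - 1) y, Icc_mem_nhds (sub_one_lt x) hxy, fun v hv ↦ hv.2.trans_lt hy, ?_⟩
  have hcont : ContinuousOn (fun z : ℝ × ℝ ↦ (1 - z.1 * z.2) ^ p)
      (Icc (x - 1) y ×ˢ Icc (0 : ℝ) 1) :=
    ContinuousOn.rpow_const (by fun_prop) fun z hz ↦
      .inl (one_sub_mul_pos (hz.1.2.trans_lt hy) hz.2).ne'
  obtain ⟨B, hB⟩ := (isCompact_Icc.prod isCompact_Icc).exists_bound_of_continuousOn hcont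
  exact ⟨B, fun v hv t ht ↦ hB (v, t) ⟨hv, ht⟩⟩

theorem hasDerivAt_eulerIntegral (hb : 0 < b) (hbc : b < c) (hx : x < 1) :
    HasDerivAt (eulerIntegral a b c) (a * eulerIntegral (a + 1) (b + 1) (c + 1) x) x := by
  have integrable_deriv : ∀ v < 1,
      IntervalIntegrable (eulerIntegrand (a + 1) (b + 1) (c + 1) v) volume 0 1 := fun v hv ↦
    intervalIntegrable_eulerIntegrand (by linarith) (by linarith) hv
  obtain ⟨s, hs, hs1, B, hB⟩ := exists_forall_norm_one_sub_mul_rpow_le (-(a + 1)) hx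
  have weight : IntervalIntegrable (fun t : ℝ ↦ t ^ (b + 1 - 1) * (1 - t) ^ (c + 1 - (b + 1) - 1))
      volume 0 1 := intervalIntegrable_rpow_mul_one_sub_rpow (by linarith) (by linarith)
  refine (intervalIntegral.hasDerivAt_integral_of_dominated_loc_of_deriv_le hs
    (F := eulerIntegrand a b c) (F' := fun v t ↦ a * eulerIntegrand (a + 1) (b + 1) (c + 1) v t)
    ?_ (intervalIntegrable_eulerIntegrand hb hbc hx)
    ((integrable_deriv x hx).const_mul a).def'.aestronglyMeasurable ?_
    ((weight.norm.mul_const B).const_mul ‖a‖) ?_).2.congr_deriv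
      (intervalIntegral.integral_const_mul _ _)
  · filter_upwards [hs] with v hv
    exact (intervalIntegrable_eulerIntegrand hb hbc (hs1 hv)).def'.aestronglyMeasurable
  · refine .of_forall fun t ht v hv ↦ ?_
    rw [uIoc_of_le zero_le_one] at ht
    rw [eulerIntegrand, norm_mul, norm_mul _ ((1 - v * t) ^ _)]
    gcongr
    exact hB v hv t (Ioc_subset_Icc_self ht)
  · refine .of_forall fun t ht v hv ↦ hasDerivAt_eulerIntegrand_param (hs1 hv) ?_
    rwa [uIoc_of_le zero_le_one] at ht

/- The hypergeometric operator turns Euler's integrand into an exact `t`-derivative. -/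
theorem hasDerivAt_eulerIntegrand (hx : x < 1) (ht : t ∈ Ioo 0 1) :
    HasDerivAt (fun t ↦ -a * eulerIntegrand (a + 1) (b + 1) (c + 2) x t)
      (x * (1 - x) * (a * ((a + 1) * eulerIntegrand (a + 2) (b + 2) (c + 2) x t))
        + (c - (a + b + 1) * x) * (a * eulerIntegrand (a + 1) (b + 1) (c + 1) x t)
        - a * b * eulerIntegrand a b c x t) t := by
  have h0 : t ≠ 0 := ht.1.ne'
  have h1 : 1 - t ≠ 0 := (sub_pos.2 ht.2).ne'
  have h2 : 1 - x * t ≠ 0 := (one_sub_mul_pos hx (Ioo_subset_Icc_self ht)).ne'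
  have d0 := hasDerivAt_rpow_const (p := b) (.inl h0)
  have d1 := ((hasDerivAt_id t).const_sub 1).rpow_const (p := c - b) (.inl h1)
  have d2 := (((hasDerivAt_id t).const_mul x).const_sub 1).rpow_const (p := -(a + 1)) (.inl h2)
  have t_split : t ^ b = t ^ (b - 1) * t := by rw [← rpow_add_one h0, sub_add_cancel]
  have t_split' : t ^ (b + 1) = t ^ (b - 1) * t * t := by
    rw [← t_split, rpow_add_one h0]
  have s_split : (1 - t) ^ (c - b) = (1 - t) ^ (c - b - 1) * (1 - t) := by
    rw [← rpow_add_one h1, sub_add_cancel]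
  have u_split : (1 - x * t) ^ (-(a + 1)) = (1 - x * t) ^ (-(a + 2)) * (1 - x * t) := by
    rw [← rpow_add_one h2]; ring_nf
  have u_split' : (1 - x * t) ^ (-a) = (1 - x * t) ^ (-(a + 2)) * (1 - x * t) * (1 - x * t) := by
    rw [← u_split, ← rpow_add_one h2]; ring_nf
  convert! ((d0.mul d1).mul d2).const_mul (-a) using 1
  · ext t
    simp only [eulerIntegrand, id, Pi.mul_apply]
    ring_nf
  · simp only [eulerIntegrand, id, Pi.mul_apply]
    rw [show b + 2 - 1 = b + 1 by ring, show b + 1 - 1 = b by ring,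
      show c + 2 - (b + 2) - 1 = c - b - 1 by ring, show c + 1 - (b + 1) - 1 = c - b - 1 by ring,
      show -(a + 1) - 1 = -(a + 2) by ring, t_split', t_split, s_split, u_split', u_split]
    ring

theorem eulerIntegral_ode (hb : 0 < b) (hbc : b < c) (hx : x < 1) :
    x * (1 - x) * (a * ((a + 1) * eulerIntegral (a + 2) (b + 2) (c + 2) x))
      + (c - (a + b + 1) * x) * (a * eulerIntegral (a + 1) (b + 1) (c + 1) x)
      - a * b * eulerIntegral a b c x = 0 := by
  have i0 := intervalIntegrable_eulerIntegrand (a := a) hb hbc hx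
  have i1 : IntervalIntegrable (eulerIntegrand (a + 1) (b + 1) (c + 1) x) volume 0 1 :=
    intervalIntegrable_eulerIntegrand (by linarith) (by linarith) hx
  have i2 : IntervalIntegrable (eulerIntegrand (a + 2) (b + 2) (c + 2) x) volume 0 1 :=
    intervalIntegrable_eulerIntegrand (by linarith) (by linarith) hx
  have j1 := (i1.const_mul a).const_mul (c - (a + b + 1) * x)
  have j2 := ((i2.const_mul (a + 1)).const_mul a).const_mul (x * (1 - x))
  have hcont : ContinuousOn (fun t ↦ -a * eulerIntegrand (a + 1) (b + 1) (c + 2) x t)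
      (Icc 0 1) := by
    refine continuousOn_const.mul ((ContinuousOn.mul ?_ ?_).mul ?_)
    · exact continuousOn_id.rpow_const fun t _ ↦ .inr (by linarith)
    · exact ContinuousOn.rpow_const (by fun_prop) fun t _ ↦ .inr (by linarith)
    · exact ContinuousOn.rpow_const (by fun_prop) fun t ht ↦ .inl (one_sub_mul_pos hx ht).ne'
  have ftc := intervalIntegral.integral_eq_sub_of_hasDerivAt_of_le zero_le_one hcont
    (fun t ht ↦ hasDerivAt_eulerIntegrand hx ht) ((j2.add j1).sub (i0.const_mul (a * b)))
  have end0 : eulerIntegrand (a + 1) (b + 1) (c + 2) x 0 = 0 := by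
    rw [eulerIntegrand, zero_rpow (by linarith)]; ring
  have end1 : eulerIntegrand (a + 1) (b + 1) (c + 2) x 1 = 0 := by
    rw [eulerIntegrand, sub_self, zero_rpow (by linarith)]; ring
  rw [intervalIntegral.integral_sub (j2.add j1) (i0.const_mul _),
    intervalIntegral.integral_add j2 j1] at ftc
  simpa only [eulerIntegral, intervalIntegral.integral_const_mul, end0, end1, mul_zero,
    sub_zero] using ftc

theorem isPositiveHypergeometric_eulerIntegral (hb : 0 < b) (hbc : b < c) :
    IsPositiveHypergeometric a b c (eulerIntegral a b c) := by
  have hasDerivAt_deriv : ∀ u < 1, HasDerivAt (deriv (eulerIntegral a b c))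
      (a * ((a + 1) * eulerIntegral (a + 2) (b + 2) (c + 2) u)) u := by
    intro u hu
    have h := (hasDerivAt_eulerIntegral (a := a + 1) (b := b + 1) (c := c + 1)
      (by linarith) (by linarith) hu).const_mul a
    norm_num only [add_assoc] at h
    refine h.congr_of_eventuallyEq ?_
    filter_upwards [Iio_mem_nhds hu] with v hv using (hasDerivAt_eulerIntegral hb hbc hv).deriv
  exact
    { pos := fun u hu ↦ eulerIntegral_pos hb hbc hu
      differentiableAt := fun u hu ↦ (hasDerivAt_eulerIntegral hb hbc hu).differentiableAt
      differentiableAt_deriv := fun u hu ↦ (hasDerivAt_deriv u hu).differentiableAt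
      ode := fun u hu ↦ by
        rw [(hasDerivAt_deriv u hu).deriv, (hasDerivAt_eulerIntegral hb hbc hu).deriv]
        exact eulerIntegral_ode hb hbc hu }

theorem isPositiveHypergeometric_hyper (hb : 0 < b) (hbc : b < c) :
    IsPositiveHypergeometric a b c (hyper a b c) := by
  have hyper_eq : hyper a b c = fun x ↦
      Gamma c / (Gamma b * Gamma (c - b)) * eulerIntegral a b c x :=
    funext fun x ↦ if_pos ⟨hbc, hb⟩
  rw [hyper_eq]
  refine (isPositiveHypergeometric_eulerIntegral hb hbc).const_mul (div_pos ?_ (mul_pos ?_ ?_))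
  exacts [Gamma_pos_of_pos (hb.trans hbc), Gamma_pos_of_pos hb, Gamma_pos_of_pos (sub_pos.2 hbc)]

end EulerIntegral

section Fhyp

theorem aCoef_add_bCoef (t : ℝ) : aCoef t + bCoef t = t := by
  unfold aCoef bCoef; ring

theorem aCoef_mul_bCoef (t : ℝ) : aCoef t * bCoef t = -2 := by
  have hsq : √(t ^ 2 + 8) ^ 2 = t ^ 2 + 8 := sq_sqrt (by positivity)
  unfold aCoef bCoef
  linear_combination -hsq / 4

theorem bCoef_pos (t : ℝ) : 0 < bCoef t := by
  have h : |t| < √(t ^ 2 + 8) := lt_sqrt_of_sq_lt (by rw [sq_abs]; linarith)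
  unfold bCoef
  linarith [neg_abs_le t]

theorem bCoef_lt_add_one {t : ℝ} (ht : 1 < t) : bCoef t < t + 1 := by
  have h : √(t ^ 2 + 8) < t + 2 := (sqrt_lt' (by linarith)).2 (by linarith)
  unfold bCoef
  linarith

theorem poch_neg_one {k : ℕ} (hk : 1 < k) : poch (-1) k = 0 := by
  simpa only [poch, Nat.cast_one] using ascPochhammer_eval_neg_coe_nat_of_lt (R := ℝ) hk

/- Here `b = c = 2`, so Euler's integral diverges and `hyper` is the power series, which terminates
because `a = -1`. -/
theorem Fhyp_one : Fhyp 1 = fun u ↦ 1 - u := by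
  have hsqrt : √((1 : ℝ) ^ 2 + 8) = 3 := by
    rw [show (1 : ℝ) ^ 2 + 8 = 3 ^ 2 by norm_num, sqrt_sq (by norm_num)]
  have ha : aCoef 1 = -1 := by rw [aCoef, hsqrt]; norm_num
  have hb : bCoef 1 = 2 := by rw [bCoef, hsqrt]; norm_num
  ext u
  rw [Fhyp, ha, hb, hyper, if_neg (by norm_num), tsum_eq_sum (s := Finset.range 2) fun k hk ↦ ?_]
  · norm_num [Finset.sum_range_succ, poch]
    ring
  · rw [poch_neg_one (by simpa using hk), zero_mul, zero_div, zero_mul]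

theorem isPositiveHypergeometric_Fhyp {t : ℝ} (ht : 1 ≤ t) :
    IsPositiveHypergeometric (aCoef t) (bCoef t) (t + 1) (Fhyp t) := by
  rcases ht.eq_or_lt with rfl | ht
  · have hderiv : deriv (Fhyp 1) = fun _ ↦ -1 := by
      ext u; simp [Fhyp_one]
    exact
      { pos := fun u hu ↦ by simpa only [Fhyp_one, sub_pos] using hu
        differentiableAt := fun u _ ↦ by rw [Fhyp_one]; fun_prop
        differentiableAt_deriv := fun u _ ↦ by rw [hderiv]; fun_prop
        ode := fun u _ ↦ by
          rw [hderiv, deriv_const, Fhyp_one, aCoef_add_bCoef, aCoef_mul_bCoef]; ring }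
  · exact isPositiveHypergeometric_hyper (bCoef_pos t) (bCoef_lt_add_one ht)

end Fhyp

section RadialEquation

/-- The differential operator of the radial equation, with `8` generalised to `-4q`: it arises from
the hypergeometric one with `q = ab`, `a + b = n`, `c = n + 1`, through `F(r) = r^{2n} φ(xr²)`. -/
noncomputable def radialOperator (n : ℕ) (q x : ℝ) (F : ℝ → ℝ) (r : ℝ) : ℝ :=
  (1 - x * r ^ 2) * r * deriv (deriv F) r - (2 * n - 1) * (1 - x * r ^ 2) * deriv F r
    - 4 * q * r * x * F r

/-- The solution `r^{2n} φ(xr²)` of the homogeneous radial equation. -/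
noncomputable def radialSolution (n : ℕ) (φ : ℝ → ℝ) (x r : ℝ) : ℝ :=
  r ^ (2 * n) * φ (x * r ^ 2)

/-- The Wronskian `uF' - u'F` of `u = radialSolution n φ x` and `F`, divided by `r^{2n-1}`; the
quotient is written out so that it makes sense at `r = 0`. -/
noncomputable def radialWronskian (n : ℕ) (φ F : ℝ → ℝ) (x r : ℝ) : ℝ :=
  r * φ (x * r ^ 2) * deriv F r
    - F r * (2 * n * φ (x * r ^ 2) + 2 * x * r ^ 2 * deriv φ (x * r ^ 2))

/-- The derivative of `radialWronskian n φ F x` when `F` solves the radial equation with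
right-hand side `g`. -/
noncomputable def radialSource (φ g : ℝ → ℝ) (x r : ℝ) : ℝ :=
  φ (x * r ^ 2) * g r / (1 - x * r ^ 2)

/-- The derivative of `F / radialSolution n φ x` when `F` solves the radial equation with
right-hand side `g` and its Wronskian vanishes at `0`. -/
noncomputable def radialSlope (n : ℕ) (φ g : ℝ → ℝ) (x r : ℝ) : ℝ :=
  (∫ σ in (0 : ℝ)..r, radialSource φ g x σ) / (r ^ (2 * n + 1) * φ (x * r ^ 2) ^ 2)

variable {n : ℕ} {a b c x r : ℝ} {φ ψ g F : ℝ → ℝ}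

theorem mul_sq_lt_one (hx : x < 1) (hr : r ∈ Icc 0 1) : x * r ^ 2 < 1 :=
  sub_pos.1 (one_sub_mul_pos hx ⟨sq_nonneg r, pow_le_one₀ hr.1 hr.2⟩)

theorem hasDerivAt_comp_mul_sq (hψ : DifferentiableAt ℝ ψ (x * r ^ 2)) :
    HasDerivAt (fun r ↦ ψ (x * r ^ 2)) (deriv ψ (x * r ^ 2) * (2 * x * r)) r :=
  hψ.hasDerivAt.comp r (hasDerivAt_mul_sq x r)

theorem IsPositiveHypergeometric.continuousOn_comp_mul_sq (hφ : IsPositiveHypergeometric a b c φ)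
    (hx : x < 1) : ContinuousOn (fun r ↦ φ (x * r ^ 2)) (Icc 0 1) :=
  HasDerivAt.continuousOn fun _ hr ↦
    hasDerivAt_comp_mul_sq (hφ.differentiableAt (mul_sq_lt_one hx hr))

theorem radialSolution_one : radialSolution n φ x 1 = φ x := by
  rw [radialSolution, one_pow, one_pow, one_mul, mul_one]

theorem radialSolution_pos (hφ : IsPositiveHypergeometric a b c φ) (hx : x < 1)
    (hr : r ∈ Ioc 0 1) : 0 < radialSolution n φ x r :=
  mul_pos (pow_pos hr.1 _) (hφ.pos (mul_sq_lt_one hx (Ioc_subset_Icc_self hr)))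

theorem continuousOn_radialSource (hφ : IsPositiveHypergeometric a b c φ) (hx : x < 1)
    (hg : ContinuousOn g (Icc 0 1)) : ContinuousOn (radialSource φ g x) (Icc 0 1) :=
  ((hφ.continuousOn_comp_mul_sq hx).mul hg).div (by fun_prop) fun _ hr ↦
    (sub_pos.2 (mul_sq_lt_one hx hr)).ne'

theorem continuousOn_radialSlope (hφ : IsPositiveHypergeometric a b c φ) (hx : x < 1)
    (hg : ContinuousOn g (Icc 0 1)) : ContinuousOn (radialSlope n φ g x) (Ioc 0 1) := by
  have primitive : ContinuousOn (fun r ↦ ∫ σ in (0 : ℝ)..r, radialSource φ g x σ) (Icc 0 1) := by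
    have h := (continuousOn_radialSource hφ hx hg).integrableOn_Icc (μ := volume)
    rw [← uIcc_of_le zero_le_one] at h ⊢
    exact intervalIntegral.continuousOn_primitive_interval h
  refine (primitive.mono Ioc_subset_Icc_self).div ((continuousOn_pow _).mul
    (((hφ.continuousOn_comp_mul_sq hx).mono Ioc_subset_Icc_self).pow 2)) fun r hr ↦ ?_
  exact (mul_pos (pow_pos hr.1 _)
    (pow_pos (hφ.pos (mul_sq_lt_one hx (Ioc_subset_Icc_self hr))) 2)).ne'

theorem hasDerivAt_radialWronskian (hφ : IsPositiveHypergeometric a b (n + 1) φ) (hab : a + b = n)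
    (hu : x * r ^ 2 < 1) (hF : DifferentiableAt ℝ F r) (hF' : DifferentiableAt ℝ (deriv F) r) :
    HasDerivAt (radialWronskian n φ F x) (radialSource φ (radialOperator n (a * b) x F) x r) r := by
  have dφ := hasDerivAt_comp_mul_sq (hφ.differentiableAt hu)
  have dφ' := hasDerivAt_comp_mul_sq (hφ.differentiableAt_deriv hu)
  have ode := hφ.ode hu
  refine ((((hasDerivAt_id r).mul dφ).mul hF'.hasDerivAt).sub (hF.hasDerivAt.mul
    ((dφ.const_mul (2 * (n : ℝ))).add (((hasDerivAt_pow 2 r).const_mul (2 * x)).mul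
      dφ')))).congr_deriv ?_
  rw [radialSource, radialOperator, eq_div_iff (sub_pos.2 hu).ne']
  simp only [id, Pi.mul_apply, Pi.add_apply]
  push_cast
  linear_combination (-4 * x * r * F r) * (ode + x * r ^ 2 * deriv φ (x * r ^ 2) * hab)

theorem radialOperator_eq_iff_hasDerivAt_radialWronskian
    (hφ : IsPositiveHypergeometric a b (n + 1) φ) (hab : a + b = n) (hu : x * r ^ 2 < 1)
    (hF : DifferentiableAt ℝ F r) (hF' : DifferentiableAt ℝ (deriv F) r) :
    radialOperator n (a * b) x F r = g r ↔
      HasDerivAt (radialWronskian n φ F x) (radialSource φ g x r) r := by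
  have hW := hasDerivAt_radialWronskian hφ hab hu hF hF'
  have hφ0 := (hφ.pos hu).ne'
  refine ⟨fun h ↦ hW.congr_deriv (by rw [radialSource, h, radialSource]), fun h ↦ ?_⟩
  simpa only [radialSource, div_left_inj' (sub_pos.2 hu).ne', mul_right_inj' hφ0] using hW.unique h

theorem hasDerivAt_radialSolution (hr : r ≠ 0) (hφ : DifferentiableAt ℝ φ (x * r ^ 2)) :
    HasDerivAt (radialSolution n φ x)
      (r ^ (2 * n) / r * (2 * n * φ (x * r ^ 2) + 2 * x * r ^ 2 * deriv φ (x * r ^ 2))) r := by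
  refine ((hasDerivAt_pow (2 * n) r).mul (hasDerivAt_comp_mul_sq hφ)).congr_deriv ?_
  rcases n with _ | n
  · simp
    field_simp
  · rw [show 2 * (n + 1) - 1 = 2 * n + 1 by omega]
    push_cast
    field_simp
    ring

theorem hasDerivAt_div_radialSolution (hr : 0 < r) (hφ : DifferentiableAt ℝ φ (x * r ^ 2))
    (hφ0 : φ (x * r ^ 2) ≠ 0) (hF : DifferentiableAt ℝ F r) :
    HasDerivAt (fun r ↦ F r / radialSolution n φ x r)
      (radialWronskian n φ F x r / (r ^ (2 * n + 1) * φ (x * r ^ 2) ^ 2)) r := by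
  refine (hF.hasDerivAt.div (hasDerivAt_radialSolution hr.ne' hφ)
    (mul_ne_zero (pow_ne_zero _ hr.ne') hφ0)).congr_deriv ?_
  rw [radialSolution, radialWronskian]
  field_simp
  ring

theorem eq_zero_of_tendsto_radialWronskian (hφ : IsPositiveHypergeometric a b c φ) (hx : x < 1)
    (hF : DifferentiableOn ℝ F (Ioo 0 1)) (hF0 : Tendsto F (𝓝[>] 0) (𝓝 0)) {C : ℝ}
    (hC : Tendsto (radialWronskian n φ F x) (𝓝[>] 0) (𝓝 C)) : C = 0 := by
  have comp_tendsto : ∀ ψ : ℝ → ℝ, DifferentiableAt ℝ ψ 0 →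
      Tendsto (fun r ↦ ψ (x * r ^ 2)) (𝓝[>] 0) (𝓝 (ψ 0)) := fun ψ hψ ↦
    (hψ.continuousAt.tendsto.comp (Continuous.tendsto' (by fun_prop) 0 0 (by simp))).mono_left
      nhdsWithin_le_nhds
  have hφ_tendsto := comp_tendsto φ (hφ.differentiableAt one_pos)
  have hφ'_tendsto := comp_tendsto (deriv φ) (hφ.differentiableAt_deriv one_pos)
  have r_tendsto : Tendsto (fun r : ℝ ↦ 2 * x * r ^ 2) (𝓝[>] 0) (𝓝 0) :=
    (Continuous.tendsto' (by fun_prop) 0 0 (by simp)).mono_left nhdsWithin_le_nhds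
  have mul_deriv_tendsto : Tendsto (fun r ↦ r * deriv F r) (𝓝[>] 0) (𝓝 (C / φ 0)) := by
    have h := (hC.add (hF0.mul ((hφ_tendsto.const_mul (2 * (n : ℝ))).add
      (r_tendsto.mul hφ'_tendsto)))).div hφ_tendsto (hφ.pos one_pos).ne'
    rw [zero_mul, add_zero] at h
    refine h.congr' ?_
    filter_upwards [Ioo_mem_nhdsGT one_pos] with r hr
    have hφr := (hφ.pos (mul_sq_lt_one hx (Ioo_subset_Icc_self hr))).ne'
    rw [Pi.div_apply, radialWronskian, sub_add_cancel, mul_right_comm, mul_div_cancel_right₀ _ hφr]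
  have hF' : ∀ᶠ r in 𝓝[>] 0, HasDerivAt F (deriv F r) r := by
    filter_upwards [Ioo_mem_nhdsGT one_pos] with r hr
    exact (hF.differentiableAt (isOpen_Ioo.mem_nhds hr)).hasDerivAt
  simpa [(hφ.pos one_pos).ne'] using eq_zero_of_tendsto_mul_deriv hF0 hF' mul_deriv_tendsto

theorem forall_radialOperator_eq_iff_eq_radialSolution_mul
    (hφ : IsPositiveHypergeometric a b (n + 1) φ) (hab : a + b = n) (hx : x < 1)
    (hg : ContinuousOn g (Icc 0 1)) (hF : ContinuousOn F (Icc 0 1)) (hF0 : F 0 = 0)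
    (hF' : DifferentiableOn ℝ F (Ioo 0 1)) (hF'' : DifferentiableOn ℝ (deriv F) (Ioo 0 1)) :
    (∀ r ∈ Ioo 0 1, radialOperator n (a * b) x F r = g r) ↔
      ∀ r ∈ Ioc 0 1, F r =
        radialSolution n φ x r * (F 1 / φ x - ∫ ρ in r..1, radialSlope n φ g x ρ) := by
  have hF0_tendsto : Tendsto F (𝓝[>] 0) (𝓝 0) := by
    simpa only [ContinuousWithinAt, hF0] using
      (hF 0 (left_mem_Icc.2 zero_le_one)).mono_of_mem_nhdsWithin (Icc_mem_nhdsGT one_pos)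
  have quotient_continuousOn : ContinuousOn (fun r ↦ F r / radialSolution n φ x r) (Ioc 0 1) :=
    (hF.mono Ioc_subset_Icc_self).div ((continuousOn_pow _).mul
      ((hφ.continuousOn_comp_mul_sq hx).mono Ioc_subset_Icc_self)) fun r hr ↦
        (radialSolution_pos hφ hx hr).ne'
  have x_mul_sq_lt : ∀ r ∈ Ioo (0 : ℝ) 1, x * r ^ 2 < 1 := fun r hr ↦
    mul_sq_lt_one hx (Ioo_subset_Icc_self hr)
  have mem_nhds : ∀ r ∈ Ioo (0 : ℝ) 1, Ioo 0 1 ∈ 𝓝 r := fun r hr ↦ isOpen_Ioo.mem_nhds hr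
  calc (∀ r ∈ Ioo 0 1, radialOperator n (a * b) x F r = g r)
    _ ↔ ∀ r ∈ Ioo 0 1, HasDerivAt (radialWronskian n φ F x) (radialSource φ g x r) r :=
      forall₂_congr fun r hr ↦ radialOperator_eq_iff_hasDerivAt_radialWronskian hφ hab
        (x_mul_sq_lt r hr) (hF'.differentiableAt (mem_nhds r hr))
        (hF''.differentiableAt (mem_nhds r hr))
    _ ↔ ∀ r ∈ Ioo 0 1, radialWronskian n φ F x r = ∫ σ in 0..r, radialSource φ g x σ :=
      forall_hasDerivAt_iff_eq_integral (continuousOn_radialSource hφ hx hg) fun C ↦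
        eq_zero_of_tendsto_radialWronskian hφ hx hF' hF0_tendsto
    _ ↔ ∀ r ∈ Ioo 0 1, radialWronskian n φ F x r / (r ^ (2 * n + 1) * φ (x * r ^ 2) ^ 2) =
          radialSlope n φ g x r :=
      forall₂_congr fun r hr ↦ (div_left_inj' (mul_pos (pow_pos hr.1 _)
        (pow_pos (hφ.pos (x_mul_sq_lt r hr)) 2)).ne').symm
    _ ↔ ∀ r ∈ Ioc 0 1, F r / radialSolution n φ x r =
          F 1 / radialSolution n φ x 1 - ∫ ρ in r..1, radialSlope n φ g x ρ :=
      forall_deriv_eq_iff_eq_sub_integral quotient_continuousOn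
        (fun r hr ↦ hasDerivAt_div_radialSolution hr.1 (hφ.differentiableAt (x_mul_sq_lt r hr))
          (hφ.pos (x_mul_sq_lt r hr)).ne' (hF'.differentiableAt (mem_nhds r hr)))
        (continuousOn_radialSlope hφ hx hg)
    _ ↔ _ := forall₂_congr fun r hr ↦ by
      rw [div_eq_iff (radialSolution_pos hφ hx hr).ne', mul_comm, radialSolution_one]

theorem integral_sqrt_substitution (hx : x ≠ 0) (hr : 0 ≤ r) (φ g : ℝ → ℝ) :
    ∫ s in (0 : ℝ)..(x * r ^ 2), φ s / (1 - s) * √(x / s) * g (√(s / x)) =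
      2 * x * ∫ σ in (0 : ℝ)..r, radialSource φ g x σ := by
  have subst := integral_eq_integral_comp_mul_sq
    (fun s ↦ φ s / (1 - s) * √(x / s) * g (√(s / x))) x le_rfl hr
  rw [zero_pow two_ne_zero, mul_zero] at subst
  rw [subst, ← intervalIntegral.integral_const_mul]
  refine intervalIntegral.integral_congr_uIoo fun σ hσ ↦ ?_
  rw [uIoo_of_le hr] at hσ
  have hσ0 : 0 < σ := hσ.1
  have sqrt_div_self : √(x / (x * σ ^ 2)) = σ⁻¹ := by
    rw [div_mul_cancel_left₀ hx, sqrt_inv, sqrt_sq hσ0.le]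
  have sqrt_self_div : √(x * σ ^ 2 / x) = σ := by
    rw [mul_div_cancel_left₀ _ hx, sqrt_sq hσ0.le]
  simp only [sqrt_div_self, sqrt_self_div, radialSource]
  field_simp

theorem integral_radialSlope_eq (hn : n ≠ 0) (hx : x ≠ 0) (hr : r ∈ Ioc 0 1) (φ g : ℝ → ℝ) :
    ∫ ρ in r..1, radialSlope n φ g x ρ =
      x ^ (n - 1) / 4 * ∫ τ in (x * r ^ 2)..x, 1 / (τ ^ (n + 1) * φ τ ^ 2) *
        ∫ s in (0 : ℝ)..τ, φ s / (1 - s) * √(x / s) * g (√(s / x)) := by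
  obtain ⟨m, rfl⟩ := Nat.exists_eq_succ_of_ne_zero hn
  have subst := integral_eq_integral_comp_mul_sq (fun τ ↦ 1 / (τ ^ (m + 1 + 1) * φ τ ^ 2) *
    ∫ s in (0 : ℝ)..τ, φ s / (1 - s) * √(x / s) * g (√(s / x))) x hr.1.le zero_le_one
  rw [one_pow, mul_one] at subst
  rw [subst, ← intervalIntegral.integral_const_mul]
  refine intervalIntegral.integral_congr_uIoo fun ρ hρ ↦ ?_
  rw [uIoo_of_le hr.2] at hρ
  have hρ0 : 0 < ρ := hr.1.trans hρ.1
  rw [integral_sqrt_substitution hx hρ0.le, radialSlope, Nat.succ_sub_one, Nat.succ_eq_add_one]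
  rcases eq_or_ne (φ (x * ρ ^ 2)) 0 with hφ | hφ
  · simp [hφ]
  · field_simp
    ring

end RadialEquation

/-- the continuous solutions on `[0,1]` (of class `C²` inside) with `F(0)=0` of
`(1-xr²)·r·F″(r) - (2n-1)(1-xr²)·F′(r) + 8rx·F(r) = g(r)` are exactly the one-parameter
family given by the explicit hypergeometric formula, parametrized by the value `F(1)`. -/
theorem ode_solution_formula (n : ℕ) (hn : 1 ≤ n) (x : ℝ) (hx : x < 1) (hx0 : x ≠ 0)
    (g : ℝ → ℝ) (hg : ContinuousOn g (Icc 0 1))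
    (F : ℝ → ℝ) (hFcont : ContinuousOn F (Icc 0 1))
    (hFsmooth : ContDiffOn ℝ 2 F (Ioo 0 1)) (hF0 : F 0 = 0) :
    (∀ r ∈ Ioo (0:ℝ) 1,
        (1 - x * r ^ 2) * r * deriv (deriv F) r
          - (2 * (n : ℝ) - 1) * (1 - x * r ^ 2) * deriv F r
          + 8 * r * x * F r = g r)
    ↔ (∀ r ∈ Icc (0:ℝ) 1,
        F r = r ^ (2 * n) * Fhyp n (x * r ^ 2) *
          (F 1 / Fhyp n x -
            x ^ (n - 1) / 4 *
              ∫ τ in (x * r ^ 2)..x,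
                (1 / (τ ^ (n + 1) * Fhyp n τ ^ 2)) *
                  ∫ s in (0:ℝ)..τ,
                    Fhyp n s / (1 - s) * Real.sqrt (x / s) * g (Real.sqrt (s / x)))) := by
  have hF' : DifferentiableOn ℝ F (Ioo 0 1) := hFsmooth.differentiableOn two_ne_zero
  have hF'' : DifferentiableOn ℝ (deriv F) (Ioo 0 1) :=
    (hFsmooth.deriv_of_isOpen (m := 1) isOpen_Ioo (by norm_num)).differentiableOn one_ne_zero
  have hn0 : n ≠ 0 := Nat.one_le_iff_ne_zero.1 hn
  have formula := forall_radialOperator_eq_iff_eq_radialSolution_mul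
    (isPositiveHypergeometric_Fhyp (Nat.one_le_cast.2 hn)) (aCoef_add_bCoef n) hx hg hFcont hF0
    hF' hF''
  refine Iff.trans (forall₂_congr fun r _ ↦ ?_) (formula.trans ⟨fun h r hr ↦ ?_, fun h r hr ↦ ?_⟩)
  · rw [radialOperator, aCoef_mul_bCoef]; ring_nf
  · rcases hr.1.eq_or_lt with rfl | hr0
    · rw [hF0, zero_pow (by positivity), zero_mul, zero_mul]
    · rw [← integral_radialSlope_eq hn0 hx0 ⟨hr0, hr.2⟩]
      exact h r ⟨hr0, hr.2⟩
  · rw [integral_radialSlope_eq hn0 hx0 hr]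
    exact h r (Ioc_subset_Icc_self hr)
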